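/- arXiv:2312.03657 — 11 statements merged into one kernel-verified Lean document; each statement's English description precedes it below -/
import Mathlib

section
/- Average–jump decomposition of boundary inner products (Proposition on average/jump operators): let H be a real inner product space, ι a finite type, and σ : ι → ι an involution (σ ∘ σ = id). For x : ι → H define the normal jump and normal average by jumpₙ x i := 0 if σ i = i and (x i + x (σ i))/2 otherwise; avₙ x i := x i if σ i = i and (x i − x (σ i))/2 otherwise. For y : ι → H define the tangential jump and tangential average by jumpₜ y i := y i if σ i = i and (y i − y (σ i))/2 otherwise; avₜ y i := 0 if σ i = i and (y i + y (σ i))/2 otherwise. Then for all x₁, x₂, y₁, y₂ : ι → H: (1) ∑ i, ⟪x₁ i, y₂ i⟫ = ∑ i, ⟪avₙ x₁ i, jumpₜ y₂ i⟫ + ∑ i, ⟪jumpₙ x₁ i, avₜ y₂ i⟫; (2) ∑ i, ⟪x₁ i, x₂ i⟫ = ∑ i, ⟪avₙ x₁ i, avₙ x₂ i⟫ + ∑ i, ⟪jumpₙ x₁ i, jumpₙ x₂ i⟫; (3) ∑ i, ⟪y₁ i, y₂ i⟫ = ∑ i, ⟪avₜ y₁ i, avₜ y₂ i⟫ + ∑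 i, ⟪jumpₜ y₁ i, jumpₜ y₂ i⟫. -/
open scoped RealInnerProductSpace

/-- The normal jump: zero at a boundary side (fixed point of `σ`), and half the sum of the
two side values at an interior facet. -/
noncomputable def jumpNor {H ι : Type*} [NormedAddCommGroup H] [InnerProductSpace ℝ H]
    [DecidableEq ι] (σ : ι → ι) (x : ι → H) (i : ι) : H :=
  if σ i = i then 0 else (2 : ℝ)⁻¹ • (x i + x (σ i))

/-- The normal average: the value itself at a boundary side, and half the difference of the
two side values at an interior facet. -/
noncomputable def avNor {H ι : Type*} [NormedAddCommGroup H] [InnerProductSpace ℝ H]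
    [DecidableEq ι] (σ : ι → ι) (x : ι → H) (i : ι) : H :=
  if σ i = i then x i else (2 : ℝ)⁻¹ • (x i - x (σ i))

/-- The tangential jump: the value itself at a boundary side, and half the difference of the
two side values at an interior facet. -/
noncomputable def jumpTan {H ι : Type*} [NormedAddCommGroup H] [InnerProductSpace ℝ H]
    [DecidableEq ι] (σ : ι → ι) (y : ι → H) (i : ι) : H :=
  if σ i = i then y i else (2 : ℝ)⁻¹ • (y i - y (σ i))

/-- The tangential average: zero at a boundary side, and half the sum of the two side values
at an interior facet. -/
noncomputable def avTan {H ι : Type*} [NormedAddCommGroup H] [InnerProductSpace ℝ H]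
    [DecidableEq ι] (σ : ι → ι) (y : ι → H) (i : ι) : H :=
  if σ i = i then 0 else (2 : ℝ)⁻¹ • (y i + y (σ i))

/-- Average–jump decomposition of boundary inner products: for an involution `σ` pairing the
facet-sides of a mesh, the `L²` pairing of a normal trace against a tangential trace splits
into average–jump cross terms, while the pairings of like traces split into
average–average plus jump–jump terms. -/
theorem average_jump_decomposition {H ι : Type*}
    [NormedAddCommGroup H] [InnerProductSpace ℝ H]
    [Fintype ι] [DecidableEq ι]
    (σ : ι → ι) (hσ : σ ∘ σ = id)
    (x₁ x₂ y₁ y₂ : ι → H) :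
    (∑ i, ⟪x₁ i, y₂ i⟫ =
        ∑ i, ⟪avNor σ x₁ i, jumpTan σ y₂ i⟫ + ∑ i, ⟪jumpNor σ x₁ i, avTan σ y₂ i⟫)
    ∧ (∑ i, ⟪x₁ i, x₂ i⟫ =
        ∑ i, ⟪avNor σ x₁ i, avNor σ x₂ i⟫ + ∑ i, ⟪jumpNor σ x₁ i, jumpNor σ x₂ i⟫)
    ∧ (∑ i, ⟪y₁ i, y₂ i⟫ =
        ∑ i, ⟪avTan σ y₁ i, avTan σ y₂ i⟫ + ∑ i, ⟪jumpTan σ y₁ i, jumpTan σ y₂ i⟫) := by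
  have hinv : Function.Involutive σ := fun i => congrFun hσ i
  have key : ∀ a b : ι → H, ∑ i, ⟪a i, b i⟫ =
      ∑ i, ⟪avNor σ a i, avNor σ b i⟫ + ∑ i, ⟪jumpNor σ a i, jumpNor σ b i⟫ := by
    intro a b
    have h1 : ∑ i, ⟪a (σ i), b (σ i)⟫ = ∑ i, ⟪a i, b i⟫ :=
      Equiv.sum_comp hinv.toPerm (fun i => ⟪a i, b i⟫)
    have h2 : ∀ i, ⟪avNor σ a i, avNor σ b i⟫ + ⟪jumpNor σ a i, jumpNor σ b i⟫ =
        2⁻¹ * (⟪a i, b i⟫ + ⟪a (σ i), b (σ i)⟫) := by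
      intro i
      unfold avNor jumpNor
      by_cases h : σ i = i
      · simp only [h, if_true, inner_zero_left]
        ring
      · simp only [h, if_false, real_inner_smul_left, real_inner_smul_right, inner_add_left,
          inner_add_right, inner_sub_left, inner_sub_right]
        ring
    rw [← Finset.sum_add_distrib, Finset.sum_congr rfl (fun i _ => h2 i), ← Finset.mul_sum,
      Finset.sum_add_distrib, h1]
    ring
  exact ⟨key x₁ y₂, key x₁ x₂, (key y₁ y₂).trans (add_comm _ _)⟩
end

section
/- Jump lemma for multisymplectic hybrid methods: let H and T be real inner product spaces, W_h a subspace (submodule) of H, and let tan, nor : H →ₗ[ℝ] T, D : H →ₗ[ℝ] H, A : H →ₗ[ℝ] H be linear maps with A symmetric (⟪A u, v⟫ = ⟪u, A v⟫ for all u, v ∈ H). Assume the integration-by-parts identity: for all u, v ∈ W_h, ⟪tan u, nor v⟫ − ⟪tan v, nor u⟫ = ⟪D u, v⟫ − ⟪u, D v⟫. Suppose for i = 1, 2 that wᵢ ∈ W_h and (t̂ᵢ, n̂ᵢ) ∈ T × T satisfy the variational equation: for all w ∈ W_h, ⟪wᵢ, D w⟫ + ⟪t̂ᵢ, nor w⟫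 − ⟪tan w, n̂ᵢ⟫ = ⟪A wᵢ, w⟫. Then ⟪t̂₁ − tan w₁, n̂₂ − nor w₂⟫ − ⟪t̂₂ − tan w₂, n̂₁ − nor w₁⟫ = ⟪t̂₁, n̂₂⟫ − ⟪t̂₂, n̂₁⟫. In particular, the multisymplecticity condition ⟪t̂₁, n̂₂⟫ − ⟪t̂₂, n̂₁⟫ = 0 holds if and only if ⟪t̂₁ − tan w₁, n̂₂ − nor w₂⟫ − ⟪t̂₂ − tan w₂, n̂₁ − nor w₁⟫ = 0. -/
open scoped RealInnerProductSpace

/-- Jump lemma for multisymplectic hybrid methods: given the integration-by-parts identity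
on the local finite element space `W` and the variational equations for two variations
`(wᵢ, t̂ᵢ, n̂ᵢ)` with symmetric `A`, the bracket of the jumps between approximate and actual
traces equals the bracket of the approximate traces; in particular multisymplecticity
`⟪t̂₁, n̂₂⟫ − ⟪t̂₂, n̂₁⟫ = 0` holds iff the bracket of the jumps vanishes. -/
theorem jump_lemma {H T : Type*}
    [NormedAddCommGroup H] [InnerProductSpace ℝ H]
    [NormedAddCommGroup T] [InnerProductSpace ℝ T]
    (W : Submodule ℝ H)
    (tan nor : H →ₗ[ℝ] T) (D A : H →ₗ[ℝ] H)
    (hA : ∀ u v : H, ⟪A u, v⟫ = ⟪u, A v⟫)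
    (hibp : ∀ u ∈ W, ∀ v ∈ W,
      ⟪tan u, nor v⟫ - ⟪tan v, nor u⟫ = ⟪D u, v⟫ - ⟪u, D v⟫)
    (w₁ w₂ : H) (hw₁ : w₁ ∈ W) (hw₂ : w₂ ∈ W)
    (t1 n1 t2 n2 : T)
    (hvar₁ : ∀ w ∈ W, ⟪w₁, D w⟫ + ⟪t1, nor w⟫ - ⟪tan w, n1⟫ = ⟪A w₁, w⟫)
    (hvar₂ : ∀ w ∈ W, ⟪w₂, D w⟫ + ⟪t2, nor w⟫ - ⟪tan w, n2⟫ = ⟪A w₂, w⟫) :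
    (⟪t1 - tan w₁, n2 - nor w₂⟫ - ⟪t2 - tan w₂, n1 - nor w₁⟫ = ⟪t1, n2⟫ - ⟪t2, n1⟫)
    ∧ ((⟪t1, n2⟫ - ⟪t2, n1⟫ = 0) ↔
        (⟪t1 - tan w₁, n2 - nor w₂⟫ - ⟪t2 - tan w₂, n1 - nor w₁⟫ = 0)) := by
  have key : ⟪t1 - tan w₁, n2 - nor w₂⟫ - ⟪t2 - tan w₂, n1 - nor w₁⟫
      = ⟪t1, n2⟫ - ⟪t2, n1⟫ := by
    have h1 := hvar₁ w₂ hw₂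
    have h2 := hvar₂ w₁ hw₁
    have h3 := hibp w₁ hw₁ w₂ hw₂
    have h4 := hA w₁ w₂
    rw [real_inner_comm (A w₂) w₁] at h4
    rw [real_inner_comm w₂ (D w₁)] at h3
    simp only [inner_sub_left, inner_sub_right]
    linarith [real_inner_comm w₁ (A w₂), real_inner_comm w₂ (D w₁)]
  exact ⟨key, by rw [key]⟩
end

section
/- Multisymplecticity of the conforming (AFW-H) local flux function: let T be a real inner product space with submodules Ŵnor, Ŵtan, Wtan, Wnor ⊆ T satisfying Wnor ≤ Ŵnor ⊔ (Wtan ⊔ Ŵtan)ᗮ, where ᗮ denotes the orthogonal complement in T. Suppose for i = 1, 2 we are given t̂ᵢ ∈ Ŵtan, n̂ᵢ ∈ Ŵnor, sᵢ ∈ Wtan, mᵢ ∈ Wnor such that ⟪t̂ᵢ − sᵢ, v⟫ = 0 for all v ∈ Ŵnor. Then the multisymplecticity identity holds: ⟪t̂₁ − s₁, n̂₂ − m₂⟫ = ⟪t̂₂ − s₂, n̂₁ − m₁⟫. -/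
open scoped RealInnerProductSpace

/-- Multisymplecticity of the conforming (AFW-H) local flux function
`Φ(z, ẑ) = ẑ^tan − z^tan`: if `Wnor ≤ Ŵnor ⊔ (Wtan ⊔ Ŵtan)ᗮ` and the flux equations
`⟪t̂ᵢ − sᵢ, v⟫ = 0` for all `v ∈ Ŵnor` hold for two variations, then the bracket of the
trace jumps vanishes. -/
theorem afw_h_flux_multisymplectic {T : Type*}
    [NormedAddCommGroup T] [InnerProductSpace ℝ T]
    (Whatnor Whattan Wtan Wnor : Submodule ℝ T)
    (hsub : Wnor ≤ Whatnor ⊔ (Wtan ⊔ Whattan)ᗮ)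
    (t1 t2 : T) (ht1 : t1 ∈ Whattan) (ht2 : t2 ∈ Whattan)
    (n1 n2 : T) (hn1 : n1 ∈ Whatnor) (hn2 : n2 ∈ Whatnor)
    (s1 s2 : T) (hs1 : s1 ∈ Wtan) (hs2 : s2 ∈ Wtan)
    (m1 m2 : T) (hm1 : m1 ∈ Wnor) (hm2 : m2 ∈ Wnor)
    (h1 : ∀ v ∈ Whatnor, ⟪t1 - s1, v⟫ = 0)
    (h2 : ∀ v ∈ Whatnor, ⟪t2 - s2, v⟫ = 0) :
    ⟪t1 - s1, n2 - m2⟫ = ⟪t2 - s2, n1 - m1⟫ := by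
  have key : ∀ t ∈ Whattan, ∀ s ∈ Wtan, (∀ v ∈ Whatnor, ⟪t - s, v⟫ = 0) →
      ∀ n ∈ Whatnor, ∀ m ∈ Wnor, ⟪t - s, n - m⟫ = 0 := by
    intro t ht s hs h n hn m hm
    obtain ⟨a, ha, b, hb, rfl⟩ := Submodule.mem_sup.mp (hsub hm)
    have hts : t - s ∈ Wtan ⊔ Whattan :=
      Submodule.sub_mem _ (Submodule.mem_sup_right ht) (Submodule.mem_sup_left hs)
    have hb0 : ⟪t - s, b⟫ = 0 := (Submodule.mem_orthogonal _ b).mp hb _ hts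
    rw [inner_sub_right, inner_add_right, h n hn, h a ha, hb0]
    norm_num
  rw [key t1 ht1 s1 hs1 h1 n2 hn2 m2 hm2, key t2 ht2 s2 hs2 h2 n1 hn1 m1 hm1]
end

section
/- Multisymplecticity of the LDG-H local flux function: let T be a real inner product space with submodules Ŵnor, Ŵtan, Wtan, Wnor ⊆ T satisfying Wtan ⊔ Ŵtan ≤ Ŵnor, and let α : T →ₗ[ℝ] T be a symmetric linear operator (⟪α x, y⟫ = ⟪x, α y⟫ for all x, y ∈ T). Suppose for i = 1, 2 we are given t̂ᵢ ∈ Ŵtan, n̂ᵢ ∈ Ŵnor, sᵢ ∈ Wtan, mᵢ ∈ Wnor such that ⟪(n̂ᵢ − mᵢ) + α (t̂ᵢ − sᵢ), v⟫ = 0 for all v ∈ Ŵnor. Then the multisymplecticity identity holds: ⟪t̂₁ − s₁, n̂₂ − m₂⟫ = ⟪t̂₂ − s₂, n̂₁ − m₁⟫. -/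
open scoped RealInnerProductSpace

/-- Multisymplecticity of the LDG-H local flux function
`Φ(z, ẑ) = (ẑ^nor − z^nor) + α(ẑ^tan − z^tan)`: if `Wtan ⊔ Ŵtan ≤ Ŵnor`, `α` is a symmetric
operator, and the flux equations `⟪(n̂ᵢ − mᵢ) + α(t̂ᵢ − sᵢ), v⟫ = 0` for all `v ∈ Ŵnor` hold
for two variations, then the bracket of the trace jumps vanishes. -/
theorem ldg_h_flux_multisymplectic {T : Type*}
    [NormedAddCommGroup T] [InnerProductSpace ℝ T]
    (Whatnor Whattan Wtan Wnor : Submodule ℝ T)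
    (hsub : Wtan ⊔ Whattan ≤ Whatnor)
    (α : T →ₗ[ℝ] T) (hα : ∀ x y : T, ⟪α x, y⟫ = ⟪x, α y⟫)
    (t1 t2 : T) (ht1 : t1 ∈ Whattan) (ht2 : t2 ∈ Whattan)
    (n1 n2 : T) (hn1 : n1 ∈ Whatnor) (hn2 : n2 ∈ Whatnor)
    (s1 s2 : T) (hs1 : s1 ∈ Wtan) (hs2 : s2 ∈ Wtan)
    (m1 m2 : T) (hm1 : m1 ∈ Wnor) (hm2 : m2 ∈ Wnor)
    (h1 : ∀ v ∈ Whatnor, ⟪(n1 - m1) + α (t1 - s1), v⟫ = 0)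
    (h2 : ∀ v ∈ Whatnor, ⟪(n2 - m2) + α (t2 - s2), v⟫ = 0) :
    ⟪t1 - s1, n2 - m2⟫ = ⟪t2 - s2, n1 - m1⟫ := by
  have hm : ∀ t ∈ Whattan, ∀ s ∈ Wtan, t - s ∈ Whatnor := fun t ht s hs =>
    Whatnor.sub_mem (hsub (Submodule.mem_sup_right ht)) (hsub (Submodule.mem_sup_left hs))
  have e1 := h1 _ (hm t2 ht2 s2 hs2)
  have e2 := h2 _ (hm t1 ht1 s1 hs1)
  rw [inner_add_left] at e1 e2
  have e3 := hα (t1 - s1) (t2 - s2)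
  rw [real_inner_comm (α (t2 - s2)) (t1 - s1)] at e3
  rw [real_inner_comm (n2 - m2) (t1 - s1), real_inner_comm (n1 - m1) (t2 - s2)]
  linarith
end

section
/- Strong multisymplecticity from local multisymplecticity and single-valued traces: let H be a real inner product space, ι a finite type, σ : ι → ι an involution (σ ∘ σ = id), E a type, and el : ι → E. Let t₁, t₂, a₁, a₂ : ι → H, and define the facet bracket b i := ⟪t₁ i, a₂ i⟫ − ⟪t₂ i, a₁ i⟫. Assume: (local multisymplecticity) for every K : E, the sum of b i over all i with el i = K is zero; and (single-valuedness) for every i with σ i ≠ i and each j ∈ {1, 2}, t_j (σ i) = t_j i and a_j (σ i) = − a_j i. Then for every set (or finite subset) 𝒦 of E, the sum of b i over all sides i such that el i ∈ 𝒦 and (σ i = i or el (σ i) ∉ 𝒦) equals zero. -/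
open scoped RealInnerProductSpace

/-- Strong multisymplecticity from local multisymplecticity and single-valued traces:
`ι` indexes facet-sides of a mesh, `el` assigns elements, `σ` pairs the two sides of each
interior facet (with `σ i = i` on the global boundary). If the facet bracket
`b i = ⟪t₁ i, a₂ i⟫ − ⟪t₂ i, a₁ i⟫` sums to zero over each element, and tangential traces
agree (resp. normal traces are opposite) across interior facets, then for any collection
`𝒦` of elements the bracket summed over the boundary sides of `𝒦` vanishes. -/
theorem strong_multisymplecticity {H E ι : Type*}
    [NormedAddCommGroup H] [InnerProductSpace ℝ H]
    [Fintype ι] [DecidableEq ι] [DecidableEq E]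
    (σ : ι → ι) (hσ : σ ∘ σ = id)
    (el : ι → E)
    (t₁ t₂ a₁ a₂ : ι → H)
    (hlocal : ∀ K : E,
      ∑ i ∈ Finset.univ.filter (fun i => el i = K),
        (⟪t₁ i, a₂ i⟫ - ⟪t₂ i, a₁ i⟫) = 0)
    (ht₁ : ∀ i, σ i ≠ i → t₁ (σ i) = t₁ i)
    (ht₂ : ∀ i, σ i ≠ i → t₂ (σ i) = t₂ i)
    (ha₁ : ∀ i, σ i ≠ i → a₁ (σ i) = - a₁ i)
    (ha₂ : ∀ i, σ i ≠ i → a₂ (σ i) = - a₂ i)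
    (𝒦 : Finset E) :
    ∑ i ∈ Finset.univ.filter (fun i => el i ∈ 𝒦 ∧ (σ i = i ∨ el (σ i) ∉ 𝒦)),
      (⟪t₁ i, a₂ i⟫ - ⟪t₂ i, a₁ i⟫) = 0 := by
  have hs : ∀ i, σ (σ i) = i := fun i => congrFun hσ i
  have htot : ∑ i ∈ Finset.univ.filter (fun i => el i ∈ 𝒦),
      (⟪t₁ i, a₂ i⟫ - ⟪t₂ i, a₁ i⟫) = 0 := by
    rw [← Finset.sum_fiberwise_of_maps_to (t := 𝒦) (g := el)
      (fun i hi => (Finset.mem_filter.mp hi).2)]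
    refine Finset.sum_eq_zero fun K hK => ?_
    rw [← hlocal K]
    refine Finset.sum_congr ?_ fun _ _ => rfl
    ext i
    simp only [Finset.mem_filter, Finset.mem_univ, true_and]
    constructor
    · exact fun h => h.2
    · exact fun h => ⟨h ▸ hK, h⟩
  rw [← Finset.sum_filter_add_sum_filter_not _ (fun i => σ i = i ∨ el (σ i) ∉ 𝒦),
    Finset.filter_filter, Finset.filter_filter] at htot
  have hint : ∑ i ∈ Finset.univ.filter (fun i => el i ∈ 𝒦 ∧ ¬ (σ i = i ∨ el (σ i) ∉ 𝒦)),
      (⟪t₁ i, a₂ i⟫ - ⟪t₂ i, a₁ i⟫) = 0 := by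
    refine Finset.sum_involution (fun i _ => σ i) ?_ ?_ ?_ ?_
    · intro i hi
      simp only [Finset.mem_filter, Finset.mem_univ, true_and, not_or] at hi
      rw [ht₁ i hi.2.1, ht₂ i hi.2.1, ha₁ i hi.2.1, ha₂ i hi.2.1, inner_neg_right,
        inner_neg_right]
      ring
    · intro i hi _
      simp only [Finset.mem_filter, Finset.mem_univ, true_and, not_or] at hi
      exact hi.2.1
    · intro i hi
      simp only [Finset.mem_filter, Finset.mem_univ, true_and, not_or, not_not, hs] at hi ⊢
      exact ⟨hi.2.2, fun h => hi.2.1 h.symm, hi.1⟩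
    · intro i _
      exact hs i
  rw [hint, add_zero] at htot
  exact htot
end

section
/- Multisymplecticity of the LDG-H method (local part): let T be a real inner product space and α : T →ₗ[ℝ] T a symmetric linear operator (⟪α x, y⟫ = ⟪x, α y⟫ for all x, y). Suppose for i = 1, 2 we are given t̂ᵢ, n̂ᵢ, sᵢ, mᵢ ∈ T such that ⟪(n̂ᵢ − mᵢ) + α (t̂ᵢ − sᵢ), v⟫ = 0 for every v ∈ T. Then: (a) the flux relation holds strongly, n̂ᵢ − mᵢ = − α (t̂ᵢ − sᵢ) for i = 1, 2; and (b) the multisymplecticity identity holds: ⟪t̂₁ − s₁, n̂₂ − m₂⟫ = ⟪t̂₂ − s₂, n̂₁ − m₁⟫. -/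
open scoped RealInnerProductSpace

/-- Multisymplecticity of the LDG-H method (local part): since the approximate normal trace
space is all of `T`, the flux equation `⟪(n̂ᵢ − mᵢ) + α(t̂ᵢ − sᵢ), v⟫ = 0` for every `v : T`
enforces the flux relation `n̂ᵢ − mᵢ = −α(t̂ᵢ − sᵢ)` strongly, and the multisymplecticity
identity for the trace jumps holds. -/
theorem ldg_h_multisymplectic {T : Type*}
    [NormedAddCommGroup T] [InnerProductSpace ℝ T]
    (α : T →ₗ[ℝ] T) (hα : ∀ x y : T, ⟪α x, y⟫ = ⟪x, α y⟫)
    (t1 n1 s1 m1 t2 n2 s2 m2 : T)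
    (h1 : ∀ v : T, ⟪(n1 - m1) + α (t1 - s1), v⟫ = 0)
    (h2 : ∀ v : T, ⟪(n2 - m2) + α (t2 - s2), v⟫ = 0) :
    (n1 - m1 = - α (t1 - s1) ∧ n2 - m2 = - α (t2 - s2))
    ∧ ⟪t1 - s1, n2 - m2⟫ = ⟪t2 - s2, n1 - m1⟫ := by
  have e1 : n1 - m1 = - α (t1 - s1) :=
    eq_neg_of_add_eq_zero_left (inner_self_eq_zero (𝕜 := ℝ).mp (h1 _))
  have e2 : n2 - m2 = - α (t2 - s2) :=
    eq_neg_of_add_eq_zero_left (inner_self_eq_zero (𝕜 := ℝ).mp (h2 _))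
  refine ⟨⟨e1, e2⟩, ?_⟩
  rw [e1, e2, inner_neg_right, inner_neg_right, ← hα, real_inner_comm]
end

section
/- Multisymplecticity of the IP-H method for the semilinear Hodge–Laplace problem (local part): let H₋, H₀, H₊ and T₋, T₀ be real inner product spaces, with linear maps δ : H₀ →ₗ H₋, d : H₀ →ₗ H₊, tan₋ : H₋ →ₗ T₋, nor₀ : H₀ →ₗ T₋, tan₀ : H₀ →ₗ T₀, nor₊ : H₊ →ₗ T₀, submodules W₋ ≤ H₋, W₀ ≤ H₀, W₊ ≤ H₊ with δ(W₀) ⊆ W₋ and d(W₀) ⊆ W₊, and symmetric linear operators α₋ : T₋ →ₗ T₋, α₀ : T₀ →ₗ T₀. Suppose for i = 1, 2 we have τᵢ ∈ W₋, vᵢ ∈ W₀, ηᵢ ∈ W₊ and τ̂ᵗᵢ ∈ T₋, v̂ⁿᵢ ∈ T₋, v̂ᵗᵢ ∈ T₀, η̂ⁿᵢ ∈ T₀ satisfying: (flux 1) v̂ⁿᵢ = nor₀ vᵢ − α₋ (τ̂ᵗᵢ − tan₋ (δ vᵢ)); (flux 2) η̂ⁿᵢ = nor₊ (d vᵢ)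 − α₀ (v̂ᵗᵢ − tan₀ vᵢ); (var τ) for all τ ∈ W₋, ⟪τᵢ − δ vᵢ, τ⟫ + ⟪v̂ⁿᵢ − nor₀ vᵢ, tan₋ τ⟫ = 0; (var η) for all η ∈ W₊, ⟪ηᵢ − d vᵢ, η⟫ − ⟪v̂ᵗᵢ − tan₀ vᵢ, nor₊ η⟫ = 0. Then ⟪τ̂ᵗ₁ − tan₋ τ₁, v̂ⁿ₂ − nor₀ v₂⟫ + ⟪v̂ᵗ₁ − tan₀ v₁, η̂ⁿ₂ − nor₊ η₂⟫ = ⟪τ̂ᵗ₂ − tan₋ τ₂, v̂ⁿ₁ − nor₀ v₁⟫ + ⟪v̂ᵗ₂ − tan₀ v₂, η̂ⁿ₁ − nor₊ η₁⟫. -/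
open scoped RealInnerProductSpace

/-- Multisymplecticity of the IP-H method for the semilinear Hodge–Laplace problem
(local part): if `δ W₀ ⊆ W₋` and `d W₀ ⊆ W₊`, the penalties `α₋, α₀` are symmetric, and
two first variations satisfy the strongly-enforced IP-H flux relations together with the
linearized local equations, then the bracket of the trace jumps is symmetric. -/
theorem ip_h_multisymplectic {Hm H0 Hp Tm T0 : Type*}
    [NormedAddCommGroup Hm] [InnerProductSpace ℝ Hm]
    [NormedAddCommGroup H0] [InnerProductSpace ℝ H0]
    [NormedAddCommGroup Hp] [InnerProductSpace ℝ Hp]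
    [NormedAddCommGroup Tm] [InnerProductSpace ℝ Tm]
    [NormedAddCommGroup T0] [InnerProductSpace ℝ T0]
    (δ : H0 →ₗ[ℝ] Hm) (d : H0 →ₗ[ℝ] Hp)
    (tanm : Hm →ₗ[ℝ] Tm) (nor0 : H0 →ₗ[ℝ] Tm)
    (tan0 : H0 →ₗ[ℝ] T0) (norp : Hp →ₗ[ℝ] T0)
    (Wm : Submodule ℝ Hm) (W0 : Submodule ℝ H0) (Wp : Submodule ℝ Hp)
    (hδW : ∀ v ∈ W0, δ v ∈ Wm) (hdW : ∀ v ∈ W0, d v ∈ Wp)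
    (αm : Tm →ₗ[ℝ] Tm) (hαm : ∀ x y : Tm, ⟪αm x, y⟫ = ⟪x, αm y⟫)
    (α0 : T0 →ₗ[ℝ] T0) (hα0 : ∀ x y : T0, ⟪α0 x, y⟫ = ⟪x, α0 y⟫)
    (τ₁ τ₂ : Hm) (v₁ v₂ : H0) (η₁ η₂ : Hp)
    (hτ₁ : τ₁ ∈ Wm) (hτ₂ : τ₂ ∈ Wm)
    (hv₁ : v₁ ∈ W0) (hv₂ : v₂ ∈ W0)
    (hη₁ : η₁ ∈ Wp) (hη₂ : η₂ ∈ Wp)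
    (τt₁ τt₂ vn₁ vn₂ : Tm) (vt₁ vt₂ ηn₁ ηn₂ : T0)
    (hflux1₁ : vn₁ = nor0 v₁ - αm (τt₁ - tanm (δ v₁)))
    (hflux1₂ : vn₂ = nor0 v₂ - αm (τt₂ - tanm (δ v₂)))
    (hflux2₁ : ηn₁ = norp (d v₁) - α0 (vt₁ - tan0 v₁))
    (hflux2₂ : ηn₂ = norp (d v₂) - α0 (vt₂ - tan0 v₂))
    (hvarτ₁ : ∀ τ ∈ Wm, ⟪τ₁ - δ v₁, τ⟫ + ⟪vn₁ - nor0 v₁, tanm τ⟫ = 0)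
    (hvarτ₂ : ∀ τ ∈ Wm, ⟪τ₂ - δ v₂, τ⟫ + ⟪vn₂ - nor0 v₂, tanm τ⟫ = 0)
    (hvarη₁ : ∀ η ∈ Wp, ⟪η₁ - d v₁, η⟫ - ⟪vt₁ - tan0 v₁, norp η⟫ = 0)
    (hvarη₂ : ∀ η ∈ Wp, ⟪η₂ - d v₂, η⟫ - ⟪vt₂ - tan0 v₂, norp η⟫ = 0) :
    ⟪τt₁ - tanm τ₁, vn₂ - nor0 v₂⟫ + ⟪vt₁ - tan0 v₁, ηn₂ - norp η₂⟫
      = ⟪τt₂ - tanm τ₂, vn₁ - nor0 v₁⟫ + ⟪vt₂ - tan0 v₂, ηn₁ - norp η₁⟫ := by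
  have hN1 : vn₁ - nor0 v₁ = -αm (τt₁ - tanm (δ v₁)) := by rw [hflux1₁]; abel
  have hN2 : vn₂ - nor0 v₂ = -αm (τt₂ - tanm (δ v₂)) := by rw [hflux1₂]; abel
  have hJ1 : τt₁ - tanm τ₁ = (τt₁ - tanm (δ v₁)) - tanm (τ₁ - δ v₁) := by
    rw [map_sub]; abel
  have hJ2 : τt₂ - tanm τ₂ = (τt₂ - tanm (δ v₂)) - tanm (τ₂ - δ v₂) := by
    rw [map_sub]; abel
  have hK1 : ηn₁ - norp η₁ = -α0 (vt₁ - tan0 v₁) - norp (η₁ - d v₁) := by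
    rw [hflux2₁, map_sub norp]; abel
  have hK2 : ηn₂ - norp η₂ = -α0 (vt₂ - tan0 v₂) - norp (η₂ - d v₂) := by
    rw [hflux2₂, map_sub norp]; abel
  have e1 := hvarτ₁ _ (Wm.sub_mem hτ₂ (hδW _ hv₂))
  have e2 := hvarτ₂ _ (Wm.sub_mem hτ₁ (hδW _ hv₁))
  have f1 := hvarη₁ _ (Wp.sub_mem hη₂ (hdW _ hv₂))
  have f2 := hvarη₂ _ (Wp.sub_mem hη₁ (hdW _ hv₁))
  rw [hN1] at e1
  rw [hN2] at e2
  rw [hN1, hN2, hJ1, hJ2, hK1, hK2]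
  generalize τt₁ - tanm (δ v₁) = a1 at *
  generalize τt₂ - tanm (δ v₂) = a2 at *
  generalize vt₁ - tan0 v₁ = b1 at *
  generalize vt₂ - tan0 v₂ = b2 at *
  generalize τ₁ - δ v₁ = p1 at *
  generalize τ₂ - δ v₂ = p2 at *
  generalize η₁ - d v₁ = q1 at *
  generalize η₂ - d v₂ = q2 at *
  have s1 := hαm a1 a2
  have s2 := hα0 b1 b2
  rw [real_inner_comm] at s1 s2
  simp only [inner_sub_left, inner_sub_right, inner_neg_left, inner_neg_right] at *
  have c1 := real_inner_comm p1 p2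
  have c2 := real_inner_comm q1 q2
  have c3 := real_inner_comm (tanm p1) (αm a2)
  have c4 := real_inner_comm (tanm p2) (αm a1)
  linarith
end

section
/- Multisymplecticity of the primal-hybrid nonconforming method: let H₋, H₀, H₊ and T₋, T₀ be real inner product spaces with linear maps δ : H₀ →ₗ H₋, d : H₀ →ₗ H₊, nor₀ : H₀ →ₗ T₋, tan₀ : H₀ →ₗ T₀, a submodule W₀ ≤ H₀, submodules W̄ᵗ ≤ T₋ and W̄ⁿ ≤ T₀, a symmetric linear operator B : H₀ →ₗ H₀, and symmetric linear operators β : T₋ →ₗ T₋, α : T₀ →ₗ T₀. Suppose for i = 1, 2 we have vᵢ ∈ W₀, τ̄ᵢ ∈ W̄ᵗ, η̄ᵢ ∈ W̄ⁿ, v̂ⁿᵢ ∈ T₋, v̂ᵗᵢ ∈ T₀, and define the numerical fluxes τ̂ᵗᵢ := τ̄ᵢ − β (v̂ⁿᵢ − nor₀ vᵢ) and η̂ⁿᵢ := η̄ᵢ − α (v̂ᵗᵢ − tan₀ vᵢ). Assume: (linearized primal equation) for all v ∈ W₀, ⟪δ vᵢ, δ v⟫ + ⟪d vᵢ, d v⟫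 + ⟪τ̂ᵗᵢ, nor₀ v⟫ − ⟪η̂ⁿᵢ, tan₀ v⟫ = ⟪B vᵢ, v⟫; (orthogonality 1) ⟪v̂ⁿᵢ − nor₀ vᵢ, τ̄⟫ = 0 for all τ̄ ∈ W̄ᵗ; (orthogonality 2) ⟪v̂ᵗᵢ − tan₀ vᵢ, η̄⟫ = 0 for all η̄ ∈ W̄ⁿ. Then ⟪τ̂ᵗ₁, v̂ⁿ₂⟫ + ⟪v̂ᵗ₁, η̂ⁿ₂⟫ = ⟪τ̂ᵗ₂, v̂ⁿ₁⟫ + ⟪v̂ᵗ₂, η̂ⁿ₁⟫. -/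
open scoped RealInnerProductSpace

/-- Multisymplecticity of the primal-hybrid nonconforming method: with symmetric Hessian
`B` and symmetric penalties `β, α`, if two first variations satisfy the linearized primal
equation with numerical fluxes `τ̂ᵗᵢ = τ̄ᵢ − β(v̂ⁿᵢ − nor₀ vᵢ)`, `η̂ⁿᵢ = η̄ᵢ − α(v̂ᵗᵢ − tan₀ vᵢ)`
and the trace orthogonality conditions, then the local multisymplecticity condition
`⟪τ̂ᵗ₁, v̂ⁿ₂⟫ + ⟪v̂ᵗ₁, η̂ⁿ₂⟫ = ⟪τ̂ᵗ₂, v̂ⁿ₁⟫ + ⟪v̂ᵗ₂, η̂ⁿ₁⟫` holds. -/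
theorem primal_hybrid_nonconforming_multisymplectic {Hm H0 Hp Tm T0 : Type*}
    [NormedAddCommGroup Hm] [InnerProductSpace ℝ Hm]
    [NormedAddCommGroup H0] [InnerProductSpace ℝ H0]
    [NormedAddCommGroup Hp] [InnerProductSpace ℝ Hp]
    [NormedAddCommGroup Tm] [InnerProductSpace ℝ Tm]
    [NormedAddCommGroup T0] [InnerProductSpace ℝ T0]
    (δ : H0 →ₗ[ℝ] Hm) (d : H0 →ₗ[ℝ] Hp)
    (nor0 : H0 →ₗ[ℝ] Tm) (tan0 : H0 →ₗ[ℝ] T0)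
    (W0 : Submodule ℝ H0)
    (Wbart : Submodule ℝ Tm) (Wbarn : Submodule ℝ T0)
    (B : H0 →ₗ[ℝ] H0) (hB : ∀ u v : H0, ⟪B u, v⟫ = ⟪u, B v⟫)
    (β : Tm →ₗ[ℝ] Tm) (hβ : ∀ x y : Tm, ⟪β x, y⟫ = ⟪x, β y⟫)
    (α : T0 →ₗ[ℝ] T0) (hα : ∀ x y : T0, ⟪α x, y⟫ = ⟪x, α y⟫)
    (v₁ v₂ : H0) (hv₁ : v₁ ∈ W0) (hv₂ : v₂ ∈ W0)
    (τbar₁ τbar₂ : Tm) (hτbar₁ : τbar₁ ∈ Wbart) (hτbar₂ : τbar₂ ∈ Wbart)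
    (ηbar₁ ηbar₂ : T0) (hηbar₁ : ηbar₁ ∈ Wbarn) (hηbar₂ : ηbar₂ ∈ Wbarn)
    (vn₁ vn₂ : Tm) (vt₁ vt₂ : T0)
    -- numerical fluxes
    (τt₁ τt₂ : Tm) (ηn₁ ηn₂ : T0)
    (hτt₁ : τt₁ = τbar₁ - β (vn₁ - nor0 v₁))
    (hτt₂ : τt₂ = τbar₂ - β (vn₂ - nor0 v₂))
    (hηn₁ : ηn₁ = ηbar₁ - α (vt₁ - tan0 v₁))
    (hηn₂ : ηn₂ = ηbar₂ - α (vt₂ - tan0 v₂))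
    -- linearized primal equation
    (hprimal₁ : ∀ v ∈ W0,
      ⟪δ v₁, δ v⟫ + ⟪d v₁, d v⟫ + ⟪τt₁, nor0 v⟫ - ⟪ηn₁, tan0 v⟫ = ⟪B v₁, v⟫)
    (hprimal₂ : ∀ v ∈ W0,
      ⟪δ v₂, δ v⟫ + ⟪d v₂, d v⟫ + ⟪τt₂, nor0 v⟫ - ⟪ηn₂, tan0 v⟫ = ⟪B v₂, v⟫)
    -- orthogonality
    (horth1₁ : ∀ τ ∈ Wbart, ⟪vn₁ - nor0 v₁, τ⟫ = 0)
    (horth1₂ : ∀ τ ∈ Wbart, ⟪vn₂ - nor0 v₂, τ⟫ = 0)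
    (horth2₁ : ∀ η ∈ Wbarn, ⟪vt₁ - tan0 v₁, η⟫ = 0)
    (horth2₂ : ∀ η ∈ Wbarn, ⟪vt₂ - tan0 v₂, η⟫ = 0) :
    ⟪τt₁, vn₂⟫ + ⟪vt₁, ηn₂⟫ = ⟪τt₂, vn₁⟫ + ⟪vt₂, ηn₁⟫ := by
  have p1 := hprimal₁ v₂ hv₂
  have p2 := hprimal₂ v₁ hv₁
  have b : ⟪B v₁, v₂⟫ = ⟪B v₂, v₁⟫ := by rw [hB, real_inner_comm]
  have c1 : ⟪δ v₁, δ v₂⟫ = ⟪δ v₂, δ v₁⟫ := real_inner_comm _ _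
  have c2 : ⟪d v₁, d v₂⟫ = ⟪d v₂, d v₁⟫ := real_inner_comm _ _
  have e : ⟪τt₁, vn₂ - nor0 v₂⟫ = ⟪τt₂, vn₁ - nor0 v₁⟫ := by
    rw [hτt₁, hτt₂, inner_sub_left, inner_sub_left, real_inner_comm _ τbar₁,
      real_inner_comm _ τbar₂, horth1₂ _ hτbar₁, horth1₁ _ hτbar₂, hβ, real_inner_comm]
  have f : ⟪ηn₁, vt₂ - tan0 v₂⟫ = ⟪ηn₂, vt₁ - tan0 v₁⟫ := by
    rw [hηn₁, hηn₂, inner_sub_left, inner_sub_left, real_inner_comm _ ηbar₁,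
      real_inner_comm _ ηbar₂, horth2₂ _ hηbar₁, horth2₁ _ hηbar₂, hα, real_inner_comm]
  rw [inner_sub_right, inner_sub_right] at e f
  rw [real_inner_comm ηn₂ vt₁, real_inner_comm ηn₁ vt₂]
  linarith
end

section
/- Equivalence of primal and first-order mixed forms for hybrid methods (σ-equation): let H₋, H₀ and T be real inner product spaces with linear maps d : H₋ →ₗ H₀, δ : H₀ →ₗ H₋, tan : H₋ →ₗ T, nor : H₀ →ₗ T, a submodule W₋ ≤ H₋, and a submodule W̄ ≤ T with tan(W₋) ⊆ W̄. Let u ∈ H₀ with δ u ∈ W₋, let σ ∈ W₋, and let û ∈ T. Assume: (integration by parts) for all τ ∈ W₋, ⟪d τ, u⟫ − ⟪τ, δ u⟫ = ⟪tan τ, nor u⟫; (trace orthogonality) ⟪û − nor u, τ̄⟫ = 0 for all τ̄ ∈ W̄. Then the mixed equation (for all τ ∈ W₋: ⟪u, d τ⟫ − ⟪û, tan τ⟫ = ⟪σ, τ⟫) holds if and only if σ = δ u. -/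
open scoped RealInnerProductSpace

/-- Equivalence of primal and first-order mixed forms for hybrid methods (σ-equation):
if `δ u ∈ W₋`, `tan(W₋) ⊆ W̄`, integration by parts holds on `W₋`, and the approximate
normal trace `û` satisfies the trace orthogonality against `W̄`, then the mixed hybrid
equation `⟪u, dτ⟫ − ⟪û, tan τ⟫ = ⟪σ, τ⟫` for all `τ ∈ W₋` holds iff `σ = δ u`. -/
theorem primal_mixed_equivalence {Hm H0 T : Type*}
    [NormedAddCommGroup Hm] [InnerProductSpace ℝ Hm]
    [NormedAddCommGroup H0] [InnerProductSpace ℝ H0]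
    [NormedAddCommGroup T] [InnerProductSpace ℝ T]
    (d : Hm →ₗ[ℝ] H0) (δ : H0 →ₗ[ℝ] Hm)
    (tan : Hm →ₗ[ℝ] T) (nor : H0 →ₗ[ℝ] T)
    (Wm : Submodule ℝ Hm) (Wbar : Submodule ℝ T)
    (htan : ∀ τ ∈ Wm, tan τ ∈ Wbar)
    (u : H0) (hu : δ u ∈ Wm) (σ : Hm) (hσ : σ ∈ Wm) (uhat : T)
    (hibp : ∀ τ ∈ Wm, ⟪d τ, u⟫ - ⟪τ, δ u⟫ = ⟪tan τ, nor u⟫)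
    (horth : ∀ τbar ∈ Wbar, ⟪uhat - nor u, τbar⟫ = 0) :
    (∀ τ ∈ Wm, ⟪u, d τ⟫ - ⟪uhat, tan τ⟫ = ⟪σ, τ⟫) ↔ σ = δ u := by
  have key : ∀ τ ∈ Wm, ⟪u, d τ⟫ - ⟪uhat, tan τ⟫ = ⟪δ u, τ⟫ := by
    intro τ hτ
    have h1 := hibp τ hτ
    have h2 := horth _ (htan τ hτ)
    rw [inner_sub_left] at h2
    rw [real_inner_comm u (d τ), real_inner_comm (δ u) τ, real_inner_comm (nor u) (tan τ)] at h1
    linarith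
  constructor
  · intro h
    have hw : σ - δ u ∈ Wm := Wm.sub_mem hσ hu
    have h0 : ⟪σ - δ u, σ - δ u⟫ = 0 := by
      rw [inner_sub_left, ← h _ hw, ← key _ hw, sub_self]
    exact sub_eq_zero.mp (inner_self_eq_zero.mp h0)
  · rintro rfl
    exact key
end

section
/- Lorentz reciprocity for the time-harmonic Maxwell equations: work on E := EuclideanSpace ℝ (Fin 3) and write, for a function f : E → ℂ differentiable at x, ∂ᵢ f (x) := fderiv ℝ f x eᵢ where eᵢ is the i-th standard basis vector; for a vector field F : E → (Fin 3 → ℂ) define curl F (x) := (∂₁F₂... specifically the vector with components (curl F)₀ = ∂₁F₂ − ∂₂F₁ indexed so that (curl F)ᵢ = ∂ⱼFₖ − ∂ₖFⱼ for (i,j,k) a cyclic permutation of (0,1,2), and div F (x) := ∑ᵢ ∂ᵢFᵢ (x); let a ×₃ b denote the cross product on Fin 3 → ℂ and a ⬝ᵥ b := ∑ᵢ aᵢ bᵢ the bilinear dot product. Let ω ∈ ℝ, let ε, μ : Matrix (Fin 3) (Fin 3) ℂ be symmetric matrices (εᵀ = ε, μᵀ = μ), and let E₁, E₂, H₁, H₂,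 J₁, J₂ : E → (Fin 3 → ℂ) with each component of E₁, E₂, H₁, H₂ differentiable at a point x. Assume the time-harmonic Maxwell equations hold at x for i = 1, 2: curl Eᵢ (x) = −(Complex.I * ω) • μ.mulVec (Hᵢ x) and curl Hᵢ (x) = (Complex.I * ω) • ε.mulVec (Eᵢ x) + Jᵢ x. Then div (fun y => (E₁ y) ×₃ (H₂ y)) (x) − (J₁ x) ⬝ᵥ (E₂ x) = div (fun y => (E₂ y) ×₃ (H₁ y)) (x) − (J₂ x) ⬝ᵥ (E₁ x). -/
open Matrix

/-- The `i`-th partial derivative (along the `i`-th standard basis vector) of a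
complex-valued function on `ℝ³`. -/
noncomputable def pderivC (i : Fin 3) (f : EuclideanSpace ℝ (Fin 3) → ℂ)
    (x : EuclideanSpace ℝ (Fin 3)) : ℂ :=
  fderiv ℝ f x (EuclideanSpace.single i 1)

/-- The curl of a complex vector field on `ℝ³`: `(curl F)ᵢ = ∂ⱼFₖ − ∂ₖFⱼ` for `(i, j, k)`
a cyclic permutation of `(0, 1, 2)`. -/
noncomputable def curlC (F : EuclideanSpace ℝ (Fin 3) → Fin 3 → ℂ)
    (x : EuclideanSpace ℝ (Fin 3)) : Fin 3 → ℂ :=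
  fun i => pderivC (i + 1) (fun y => F y (i + 2)) x - pderivC (i + 2) (fun y => F y (i + 1)) x

/-- The divergence of a complex vector field on `ℝ³`. -/
noncomputable def divC (F : EuclideanSpace ℝ (Fin 3) → Fin 3 → ℂ)
    (x : EuclideanSpace ℝ (Fin 3)) : ℂ :=
  ∑ i, pderivC i (fun y => F y i) x

theorem pderivC_mul_sub (i : Fin 3) {a b c d : EuclideanSpace ℝ (Fin 3) → ℂ}
    {x : EuclideanSpace ℝ (Fin 3)}
    (ha : DifferentiableAt ℝ a x) (hb : DifferentiableAt ℝ b x)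
    (hc : DifferentiableAt ℝ c x) (hd : DifferentiableAt ℝ d x) :
    pderivC i (fun y => a y * b y - c y * d y) x
      = a x * pderivC i b x + b x * pderivC i a x
        - (c x * pderivC i d x + d x * pderivC i c x) := by
  unfold pderivC
  have h := ((ha.hasFDerivAt.mul hb.hasFDerivAt).sub (hc.hasFDerivAt.mul hd.hasFDerivAt)).fderiv
  have h2 := congrArg (fun L => L (EuclideanSpace.single i 1)) h
  simp at h2
  exact h2

theorem divC_cross {F G : EuclideanSpace ℝ (Fin 3) → Fin 3 → ℂ}
    {x : EuclideanSpace ℝ (Fin 3)}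
    (hF : ∀ i, DifferentiableAt ℝ (fun y => F y i) x)
    (hG : ∀ i, DifferentiableAt ℝ (fun y => G y i) x) :
    divC (fun y => crossProduct (F y) (G y)) x
      = curlC F x ⬝ᵥ G x - F x ⬝ᵥ curlC G x := by
  have e3 : (1 : Fin 3) + 2 = 0 := rfl
  have e4 : (2 : Fin 3) + 1 = 0 := rfl
  have e5 : (2 : Fin 3) + 2 = 1 := rfl
  have e6 : (1 : Fin 3) + 1 = 2 := rfl
  simp only [divC, curlC, dotProduct, Fin.sum_univ_three, cross_apply, Matrix.cons_val_zero,
    Matrix.cons_val_one, Matrix.cons_val, e3, e4, e5, e6, zero_add]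
  rw [pderivC_mul_sub 0 (hF 1) (hG 2) (hF 2) (hG 1),
    pderivC_mul_sub 1 (hF 2) (hG 0) (hF 0) (hG 2),
    pderivC_mul_sub 2 (hF 0) (hG 1) (hF 1) (hG 0)]
  ring

theorem symm_dot {A : Matrix (Fin 3) (Fin 3) ℂ} (hA : A.IsSymm) (u v : Fin 3 → ℂ) :
    A.mulVec u ⬝ᵥ v = u ⬝ᵥ A.mulVec v := by
  rw [Matrix.dotProduct_mulVec, ← Matrix.mulVec_transpose, hA.eq]

/-- Lorentz reciprocity for the time-harmonic Maxwell equations: for symmetric permittivity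
and permeability tensors `ε, μ` and two solutions `(Eᵢ, Hᵢ)` with current densities `Jᵢ` of
`curl Eᵢ = −iω μ Hᵢ`, `curl Hᵢ = iω ε Eᵢ + Jᵢ` at a point `x`, one has
`div(E₁ × H₂) − J₁ ⬝ᵥ E₂ = div(E₂ × H₁) − J₂ ⬝ᵥ E₁` at `x`. -/
theorem lorentz_reciprocity (ω : ℝ) (ε μ : Matrix (Fin 3) (Fin 3) ℂ)
    (hε : ε.IsSymm) (hμ : μ.IsSymm)
    (E₁ E₂ H₁ H₂ J₁ J₂ : EuclideanSpace ℝ (Fin 3) → Fin 3 → ℂ)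
    (x : EuclideanSpace ℝ (Fin 3))
    (hdE₁ : ∀ i, DifferentiableAt ℝ (fun y => E₁ y i) x)
    (hdE₂ : ∀ i, DifferentiableAt ℝ (fun y => E₂ y i) x)
    (hdH₁ : ∀ i, DifferentiableAt ℝ (fun y => H₁ y i) x)
    (hdH₂ : ∀ i, DifferentiableAt ℝ (fun y => H₂ y i) x)
    (hE₁ : curlC E₁ x = (-(Complex.I * (ω : ℂ))) • μ.mulVec (H₁ x))
    (hE₂ : curlC E₂ x = (-(Complex.I * (ω : ℂ))) • μ.mulVec (H₂ x))
    (hH₁ : curlC H₁ x = (Complex.I * (ω : ℂ)) • ε.mulVec (E₁ x) + J₁ x)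
    (hH₂ : curlC H₂ x = (Complex.I * (ω : ℂ)) • ε.mulVec (E₂ x) + J₂ x) :
    divC (fun y => crossProduct (E₁ y) (H₂ y)) x - J₁ x ⬝ᵥ E₂ x
      = divC (fun y => crossProduct (E₂ y) (H₁ y)) x - J₂ x ⬝ᵥ E₁ x := by
  rw [divC_cross hdE₁ hdH₂, divC_cross hdE₂ hdH₁, hE₁, hE₂, hH₁, hH₂]
  simp only [smul_dotProduct, dotProduct_smul, dotProduct_add, smul_eq_mul]
  rw [symm_dot hμ, dotProduct_comm (H₁ x), ← symm_dot hε (E₁ x), dotProduct_comm _ (E₂ x),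
    dotProduct_comm (J₁ x), dotProduct_comm (J₂ x)]
  ring
end

section
/- Multisymplectic conservation law for the vorticity–velocity–pressure (Stokes/Maxwell-type) system: work on E := EuclideanSpace ℝ (Fin 3) and write ∂ᵢ f (x) := fderiv ℝ f x eᵢ for f differentiable at x, with eᵢ the standard basis; for vector fields F : E → (Fin 3 → ℝ) define curl F and div F componentwise via (curl F)ᵢ = ∂ⱼFₖ − ∂ₖFⱼ for cyclic (i,j,k) and div F = ∑ᵢ ∂ᵢFᵢ, and for a scalar f define grad f (x) := (∂₀f, ∂₁f, ∂₂f)(x); let ×₃ denote the cross product and • scalar multiplication. Let v₁, v₂, τ₁, τ₂ : E → (Fin 3 → ℝ) and η₁, η₂ : E → ℝ, all with components differentiable at a point x, satisfying at x for i = 1, 2: curl vᵢ (x) = τᵢ x, curl τᵢ (x) = grad ηᵢ (x), and div vᵢ (x) = 0. Then div (fun y => (τ₁ y) ×₃ (v₂ y) − (τ₂ y) ×₃ (v₁ y) + (η₂ y) • (v₁ y) − (η₁ y) • (v₂ y)) (x) = 0. -/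
/-- The `i`-th partial derivative (along the `i`-th standard basis vector) of a
real-valued function on `ℝ³`. -/
noncomputable def pderiv3 (i : Fin 3) (f : EuclideanSpace ℝ (Fin 3) → ℝ)
    (x : EuclideanSpace ℝ (Fin 3)) : ℝ :=
  fderiv ℝ f x (EuclideanSpace.single i 1)

/-- The curl of a vector field on `ℝ³`: `(curl F)ᵢ = ∂ⱼFₖ − ∂ₖFⱼ` for `(i, j, k)` a
cyclic permutation of `(0, 1, 2)`. -/
noncomputable def curl3 (F : EuclideanSpace ℝ (Fin 3) → Fin 3 → ℝ)
    (x : EuclideanSpace ℝ (Fin 3)) : Fin 3 → ℝ :=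
  fun i => pderiv3 (i + 1) (fun y => F y (i + 2)) x - pderiv3 (i + 2) (fun y => F y (i + 1)) x

/-- The divergence of a vector field on `ℝ³`. -/
noncomputable def div3 (F : EuclideanSpace ℝ (Fin 3) → Fin 3 → ℝ)
    (x : EuclideanSpace ℝ (Fin 3)) : ℝ :=
  ∑ i, pderiv3 i (fun y => F y i) x

/-- The gradient of a scalar field on `ℝ³`. -/
noncomputable def grad3 (f : EuclideanSpace ℝ (Fin 3) → ℝ)
    (x : EuclideanSpace ℝ (Fin 3)) : Fin 3 → ℝ :=
  fun i => pderiv3 i f x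

theorem pderiv3_aux (i : Fin 3) (a b c d e f g h k l m n : EuclideanSpace ℝ (Fin 3) → ℝ)
    (x : EuclideanSpace ℝ (Fin 3))
    (ha : DifferentiableAt ℝ a x) (hb : DifferentiableAt ℝ b x)
    (hc : DifferentiableAt ℝ c x) (hd : DifferentiableAt ℝ d x)
    (he : DifferentiableAt ℝ e x) (hf : DifferentiableAt ℝ f x)
    (hg : DifferentiableAt ℝ g x) (hh : DifferentiableAt ℝ h x)
    (hk : DifferentiableAt ℝ k x) (hl : DifferentiableAt ℝ l x)
    (hm : DifferentiableAt ℝ m x) (hn : DifferentiableAt ℝ n x) :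
    pderiv3 i (fun y => (a y * b y - c y * d y) - (e y * f y - g y * h y)
      + k y * l y - m y * n y) x =
    (a x * pderiv3 i b x + b x * pderiv3 i a x - (c x * pderiv3 i d x + d x * pderiv3 i c x))
    - (e x * pderiv3 i f x + f x * pderiv3 i e x - (g x * pderiv3 i h x + h x * pderiv3 i g x))
    + (k x * pderiv3 i l x + l x * pderiv3 i k x)
    - (m x * pderiv3 i n x + n x * pderiv3 i m x) := by
  have H := (((((ha.hasFDerivAt.mul hb.hasFDerivAt).sub (hc.hasFDerivAt.mul hd.hasFDerivAt)).sub
    ((he.hasFDerivAt.mul hf.hasFDerivAt).sub (hg.hasFDerivAt.mul hh.hasFDerivAt))).add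
    (hk.hasFDerivAt.mul hl.hasFDerivAt)).sub (hm.hasFDerivAt.mul hn.hasFDerivAt)).fderiv
  unfold pderiv3
  refine (congrArg (fun L => L (EuclideanSpace.single i 1)) H).trans ?_
  simp

/-- Multisymplectic conservation law for the vorticity–velocity–pressure (Stokes /
Maxwell-type) system: first variations `wᵢ = (τᵢ, vᵢ, ηᵢ)` satisfying
`curl vᵢ = τᵢ`, `curl τᵢ = grad ηᵢ`, `div vᵢ = 0` at a point `x` obey
`div(τ₁ × v₂ − τ₂ × v₁ + η₂ v₁ − η₁ v₂) = 0` at `x`. -/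
theorem vvp_multisymplectic_conservation
    (v₁ v₂ τ₁ τ₂ : EuclideanSpace ℝ (Fin 3) → Fin 3 → ℝ)
    (η₁ η₂ : EuclideanSpace ℝ (Fin 3) → ℝ)
    (x : EuclideanSpace ℝ (Fin 3))
    (hdv₁ : ∀ i, DifferentiableAt ℝ (fun y => v₁ y i) x)
    (hdv₂ : ∀ i, DifferentiableAt ℝ (fun y => v₂ y i) x)
    (hdτ₁ : ∀ i, DifferentiableAt ℝ (fun y => τ₁ y i) x)
    (hdτ₂ : ∀ i, DifferentiableAt ℝ (fun y => τ₂ y i) x)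
    (hdη₁ : DifferentiableAt ℝ η₁ x)
    (hdη₂ : DifferentiableAt ℝ η₂ x)
    (hcv₁ : curl3 v₁ x = τ₁ x) (hcv₂ : curl3 v₂ x = τ₂ x)
    (hcτ₁ : curl3 τ₁ x = grad3 η₁ x) (hcτ₂ : curl3 τ₂ x = grad3 η₂ x)
    (hdiv₁ : div3 v₁ x = 0) (hdiv₂ : div3 v₂ x = 0) :
    div3 (fun y =>
      crossProduct (τ₁ y) (v₂ y) - crossProduct (τ₂ y) (v₁ y)
        + η₂ y • v₁ y - η₁ y • v₂ y) x = 0 := by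
  have h0 := pderiv3_aux 0 _ _ _ _ _ _ _ _ _ _ _ _ x (hdτ₁ 1) (hdv₂ 2) (hdτ₁ 2) (hdv₂ 1)
    (hdτ₂ 1) (hdv₁ 2) (hdτ₂ 2) (hdv₁ 1) hdη₂ (hdv₁ 0) hdη₁ (hdv₂ 0)
  have h1 := pderiv3_aux 1 _ _ _ _ _ _ _ _ _ _ _ _ x (hdτ₁ 2) (hdv₂ 0) (hdτ₁ 0) (hdv₂ 2)
    (hdτ₂ 2) (hdv₁ 0) (hdτ₂ 0) (hdv₁ 2) hdη₂ (hdv₁ 1) hdη₁ (hdv₂ 1)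
  have h2 := pderiv3_aux 2 _ _ _ _ _ _ _ _ _ _ _ _ x (hdτ₁ 0) (hdv₂ 1) (hdτ₁ 1) (hdv₂ 0)
    (hdτ₂ 0) (hdv₁ 1) (hdτ₂ 1) (hdv₁ 0) hdη₂ (hdv₁ 2) hdη₁ (hdv₂ 2)
  have key : ∀ F : EuclideanSpace ℝ (Fin 3) → Fin 3 → ℝ, ∀ w : Fin 3 → ℝ, curl3 F x = w →
      (pderiv3 1 (fun y => F y 2) x - pderiv3 2 (fun y => F y 1) x = w 0 ∧
      pderiv3 2 (fun y => F y 0) x - pderiv3 0 (fun y => F y 2) x = w 1 ∧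
      pderiv3 0 (fun y => F y 1) x - pderiv3 1 (fun y => F y 0) x = w 2) := by
    rintro F w rfl
    exact ⟨rfl, rfl, rfl⟩
  obtain ⟨a0, a1, a2⟩ := key v₁ _ hcv₁
  obtain ⟨b0, b1, b2⟩ := key v₂ _ hcv₂
  obtain ⟨c0, c1, c2⟩ := key τ₁ _ hcτ₁
  obtain ⟨d0, d1, d2⟩ := key τ₂ _ hcτ₂
  simp only [grad3] at c0 c1 c2 d0 d1 d2
  simp only [div3, Fin.sum_univ_three] at hdiv₁ hdiv₂ ⊢
  simp only [cross_apply, Pi.add_apply, Pi.sub_apply, Pi.smul_apply, smul_eq_mul,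
    Matrix.cons_val]
  rw [h0, h1, h2]
  linear_combination η₂ x * hdiv₁ - η₁ x * hdiv₂
    + v₂ x 0 * c0 + v₂ x 1 * c1 + v₂ x 2 * c2 - v₁ x 0 * d0 - v₁ x 1 * d1 - v₁ x 2 * d2
    - τ₁ x 0 * b0 - τ₁ x 1 * b1 - τ₁ x 2 * b2 + τ₂ x 0 * a0 + τ₂ x 1 * a1 + τ₂ x 2 * a2
end
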